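/- The Minkowski reflections along the eight Kerckhoff–Storm vectors satisfy the Coxeter relations prescribed by the Coxeter diagram of Γ: (r_x ∘ r_y)² = id for every pair (x,y) among (t,u), (t,ℓ), (t,c), (t,i₀), (t,i₂), (b,u), (b,ℓ), (b,c), (b,i₀), (b,i₁), (u,c), (u,i₀), (u,i₂), (ℓ,c), (ℓ,i₀), (ℓ,i₁), (c,i₁), (c,i₂), (i₁,i₂), and (r_t ∘ r_{i₁})³ = (r_b ∘ r_{i₂})³ = (r_{i₀} ∘ r_{i₁})³ = (r_{i₀} ∘ r_{i₂})³ = id. -/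

import Mathlib

/-!
When `B` is definite on the span of `x` and `y`, the product `r_x r_y` acts there as a rotation,
whose angle is determined by `4 B(x, y)² / (B(x, x) B(y, y))`, and as the identity on the orthogonal
complement. This number is `4 cos² (π / m)` for a pair labelled `m`, hence `0` for `m = 2` and `1`
for `m = 3`, so the relations can be read off from the Gram matrix of the eight vectors.
-/

noncomputable section

open Real

/-- The Minkowski bilinear form of signature (1,4) on `ℝ^5`. -/
def B (x y : Fin 5 → ℝ) : ℝ :=
  -(x 0 * y 0) + x 1 * y 1 + x 2 * y 2 + x 3 * y 3 + x 4 * y 4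

/-- The Kerckhoff–Storm vector `t`. -/
def vt : Fin 5 → ℝ := ![Real.sqrt 2, 1, 1, 1, Real.sqrt 7]
/-- The Kerckhoff–Storm vector `b`. -/
def vb : Fin 5 → ℝ := ![Real.sqrt 2, 1, 1, -1, -Real.sqrt 7]
/-- The Kerckhoff–Storm vector `u`. -/
def vu : Fin 5 → ℝ := ![Real.sqrt 2, 1, 1, 1, -(Real.sqrt 7 / 7)]
/-- The Kerckhoff–Storm vector `ℓ`. -/
def vl : Fin 5 → ℝ := ![Real.sqrt 2, 1, 1, -1, Real.sqrt 7 / 7]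
/-- The Kerckhoff–Storm vector `c`. -/
def vc : Fin 5 → ℝ := ![1, Real.sqrt 2, 0, 0, 0]
/-- The Kerckhoff–Storm vector `i₀`. -/
def vi0 : Fin 5 → ℝ := ![0, -1, 1, 0, 0]
/-- The Kerckhoff–Storm vector `i₁`. -/
def vi1 : Fin 5 → ℝ := ![0, 0, -1, -1, 0]
/-- The Kerckhoff–Storm vector `i₂`. -/
def vi2 : Fin 5 → ℝ := ![0, 0, -1, 1, 0]

/-- The Minkowski reflection along a vector `v` with `B v v ≠ 0`. -/
def mrefl (v : Fin 5 → ℝ) (x : Fin 5 → ℝ) : Fin 5 → ℝ :=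
  x - (2 * (B x v / B v v)) • v

section Reflection

open Module

variable {R M : Type*} [CommRing R] [AddCommGroup M] [Module R M]

section Dual

variable {x y : M} {f g : Dual R M}

lemma reflection_mul_reflection_sq_eq_one (hf : f x = 2) (hg : g y = 2)
    (hfy : f y = 0) (hgx : g x = 0) : (reflection hf * reflection hg) ^ 2 = 1 := by
  have commute : Commute (reflection hf) (reflection hg) := by
    ext z
    simp only [LinearEquiv.mul_apply, reflection_apply, map_sub, map_smul, hfy, hgx]
    module
  have reflection_sq {v : M} {φ : Dual R M} (h : φ v = 2) : reflection h ^ 2 = 1 := by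
    rw [sq, ← eq_inv_iff_mul_eq_one, reflection_inv]
  rw [commute.mul_pow, reflection_sq, reflection_sq, one_mul]

lemma reflection_mul_reflection_pow_three_eq_one (hf : f x = 2) (hg : g y = 2)
    (h : f y * g x = 1) : (reflection hf * reflection hg) ^ 3 = 1 := by
  ext z
  -- `-1` is the root of `S₁ + S₀ = X + 1`, which divides both coefficients for exponent `3`.
  rw [reflection_mul_reflection_pow_apply hf hg 3 z (-1) (by rw [h]; ring)]
  simp

end Dual

section BilinForm

open LinearMap LinearMap.IsReflective

variable {β : LinearMap.BilinForm R M} {x y : M}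

lemma coroot_apply_eq_zero (hx : IsReflective β x) (h : β x y = 0) : coroot β hx y = 0 :=
  hx.regular.left <| by simp [h]

lemma coroot_apply_mul_coroot_apply_eq_one (hx : IsReflective β x) (hy : IsReflective β y)
    (h : 4 * (β x y * β y x) = β x x * β y y) : coroot β hx y * coroot β hy x = 1 := by
  refine (hx.regular.mul hy.regular).left ?_
  calc β x x * β y y * (coroot β hx y * coroot β hy x)
      = (β x x * coroot β hx y) * (β y y * coroot β hy x) := by ring
    _ = (2 * β x y) * (2 * β y x) := by simp only [apply_self_mul_coroot_apply]
    _ = β x x * β y y * 1 := by linear_combination h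

end BilinForm

lemma isReflective_of_apply_self_ne_zero {K V : Type*} [Field K] [AddCommGroup V] [Module K V]
    {β : LinearMap.BilinForm K V} {v : V} (hv : β v v ≠ 0) : LinearMap.IsReflective β v where
  regular := .of_ne_zero hv
  dvd_two_mul _ := hv.isUnit.dvd

end Reflection

section Minkowski

/-- The Minkowski form `B` as a bilinear form in the sense of Mathlib, which gives access to the
theory of reflections along reflective vectors. -/
def minkowskiForm : LinearMap.BilinForm ℝ (Fin 5 → ℝ) :=
  LinearMap.mk₂ ℝ B
    (fun x y z ↦ by simp only [B, Pi.add_apply]; ring)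
    (fun a x y ↦ by simp only [B, Pi.smul_apply, smul_eq_mul]; ring)
    (fun x y z ↦ by simp only [B, Pi.add_apply]; ring)
    (fun a x y ↦ by simp only [B, Pi.smul_apply, smul_eq_mul]; ring)

lemma B_comm (x y : Fin 5 → ℝ) : B x y = B y x := by
  simp only [B, mul_comm]

variable {v w : Fin 5 → ℝ}

lemma mrefl_eq_reflection (hv : minkowskiForm.IsReflective v) :
    mrefl v = Module.reflection (hv.coroot_apply_self minkowskiForm) := by
  funext x
  have hBv : B v v ≠ 0 := hv.regular.ne_zero
  have coroot_apply : hv.coroot minkowskiForm x = 2 * (B x v / B v v) := by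
    rw [← mul_div_assoc, eq_div_iff hBv, B_comm x v, mul_comm]
    exact hv.apply_self_mul_coroot_apply minkowskiForm
  rw [Module.reflection_apply, coroot_apply, mrefl]

lemma iterate_mrefl_comp_mrefl (hv : minkowskiForm.IsReflective v)
    (hw : minkowskiForm.IsReflective w) (n : ℕ) :
    (mrefl v ∘ mrefl w)^[n] =
      ⇑((Module.reflection (hv.coroot_apply_self minkowskiForm) *
        Module.reflection (hw.coroot_apply_self minkowskiForm)) ^ n) := by
  rw [LinearEquiv.coe_pow, mrefl_eq_reflection hv, mrefl_eq_reflection hw]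
  rfl

lemma mrefl_comp_mrefl_iterate_two (hv : B v v ≠ 0) (hw : B w w ≠ 0) (h : B v w = 0) :
    (mrefl v ∘ mrefl w)^[2] = id := by
  have hv_refl : minkowskiForm.IsReflective v := isReflective_of_apply_self_ne_zero hv
  have hw_refl : minkowskiForm.IsReflective w := isReflective_of_apply_self_ne_zero hw
  rw [iterate_mrefl_comp_mrefl hv_refl hw_refl, reflection_mul_reflection_sq_eq_one _ _
    (coroot_apply_eq_zero hv_refl h) (coroot_apply_eq_zero hw_refl ((B_comm w v).trans h))]
  rfl

lemma mrefl_comp_mrefl_iterate_three (hv : B v v ≠ 0) (hw : B w w ≠ 0)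
    (h : 4 * B v w ^ 2 = B v v * B w w) : (mrefl v ∘ mrefl w)^[3] = id := by
  have hv_refl : minkowskiForm.IsReflective v := isReflective_of_apply_self_ne_zero hv
  have hw_refl : minkowskiForm.IsReflective w := isReflective_of_apply_self_ne_zero hw
  have h' : 4 * (B v w * B w v) = B v v * B w w := by rw [B_comm w v, ← sq, h]
  rw [iterate_mrefl_comp_mrefl hv_refl hw_refl, reflection_mul_reflection_pow_three_eq_one _ _
    (coroot_apply_mul_coroot_apply_eq_one hv_refl hw_refl h')]
  rfl

end Minkowski

/-- The eight Kerckhoff–Storm vectors, in the order `t, b, u, ℓ, c, i₀, i₁, i₂`. -/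
def ksVector : Fin 8 → Fin 5 → ℝ := ![vt, vb, vu, vl, vc, vi0, vi1, vi2]

/-- The Gram matrix of the Kerckhoff–Storm vectors, with rows and columns in the order of
`ksVector`. -/
def ksGram : Matrix (Fin 8) (Fin 8) ℝ :=
  !![ 8, -8,    0,    0,   0,   0, -2,  0;
     -8,  8,    0,    0,   0,   0,  0, -2;
      0,  0,  8/7, -8/7,   0,   0, -2,  0;
      0,  0, -8/7,  8/7,   0,   0,  0, -2;
      0,  0,    0,    0,   1, -√2,  0,  0;
      0,  0,    0,    0, -√2,   2, -1, -1;
     -2,  0,   -2,    0,   0,  -1,  2,  0;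
      0, -2,    0,   -2,   0,  -1,  0,  2]

lemma B_ksVector (i j : Fin 8) : B (ksVector i) (ksVector j) = ksGram i j := by
  have sqrt_two_mul_self : √2 * √2 = 2 := mul_self_sqrt (by norm_num)
  have sqrt_seven_mul_self : √7 * √7 = 7 := mul_self_sqrt (by norm_num)
  fin_cases i <;> fin_cases j <;>
    simp [ksVector, ksGram, B, vt, vb, vu, vl, vc, vi0, vi1, vi2] <;>
    linarith only [sqrt_two_mul_self, sqrt_seven_mul_self]

lemma B_ksVector_self_ne_zero (i : Fin 8) : B (ksVector i) (ksVector i) ≠ 0 := by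
  rw [B_ksVector]
  fin_cases i <;> simp [ksGram]

lemma mrefl_ksVector_iterate_two (i j : Fin 8) (h : ksGram i j = 0) :
    (mrefl (ksVector i) ∘ mrefl (ksVector j))^[2] = id :=
  mrefl_comp_mrefl_iterate_two (B_ksVector_self_ne_zero i) (B_ksVector_self_ne_zero j)
    ((B_ksVector i j).trans h)

lemma mrefl_ksVector_iterate_three (i j : Fin 8)
    (h : 4 * ksGram i j ^ 2 = ksGram i i * ksGram j j) :
    (mrefl (ksVector i) ∘ mrefl (ksVector j))^[3] = id :=
  mrefl_comp_mrefl_iterate_three (B_ksVector_self_ne_zero i) (B_ksVector_self_ne_zero j)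
    (by simpa only [B_ksVector] using h)

/-- The Minkowski reflections along the eight Kerckhoff–Storm vectors satisfy the
Coxeter relations prescribed by the Coxeter diagram of `Γ`: the listed commuting pairs
give products of order dividing 2, and the listed `π/3`-pairs give products of order
dividing 3. -/
theorem kerckhoff_storm_coxeter_relations :
    (∀ p ∈ [(vt, vu), (vt, vl), (vt, vc), (vt, vi0), (vt, vi2),
            (vb, vu), (vb, vl), (vb, vc), (vb, vi0), (vb, vi1),
            (vu, vc), (vu, vi0), (vu, vi2),
            (vl, vc), (vl, vi0), (vl, vi1),
            (vc, vi1), (vc, vi2), (vi1, vi2)],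
      (mrefl p.1 ∘ mrefl p.2) ∘ (mrefl p.1 ∘ mrefl p.2) = id) ∧
    (∀ p ∈ [(vt, vi1), (vb, vi2), (vi0, vi1), (vi0, vi2)],
      (mrefl p.1 ∘ mrefl p.2) ∘ (mrefl p.1 ∘ mrefl p.2) ∘ (mrefl p.1 ∘ mrefl p.2) = id) := by
  simp only [List.forall_mem_cons, List.not_mem_nil, false_imp_iff, implies_true, and_true]
  constructor
  · have comm := mrefl_ksVector_iterate_two
    exact ⟨comm 0 2 rfl, comm 0 3 rfl, comm 0 4 rfl, comm 0 5 rfl, comm 0 7 rfl,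
      comm 1 2 rfl, comm 1 3 rfl, comm 1 4 rfl, comm 1 5 rfl, comm 1 6 rfl,
      comm 2 4 rfl, comm 2 5 rfl, comm 2 7 rfl,
      comm 3 4 rfl, comm 3 5 rfl, comm 3 6 rfl,
      comm 4 6 rfl, comm 4 7 rfl, comm 6 7 rfl⟩
  · have braid := mrefl_ksVector_iterate_three
    refine ⟨braid 0 6 ?_, braid 1 7 ?_, braid 5 6 ?_, braid 5 7 ?_⟩ <;>
      simp [ksGram] <;> norm_num
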